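/- arXiv:1710.06742 — 2 statements merged into one kernel-verified Lean document; each statement's English description precedes it below -/
import Mathlib

section
/- Let v ∈ V^k. Suppose that all facet degrees of freedom of v vanish, i.e., for each of the six faces ê of the cube [−1,1]³ and every polynomial p of degree at most k in each of the two variables parametrizing that face, the integral over ê of (v·n) p vanishes (n the outward unit normal); and all interior degrees of freedom vanish, i.e., ∫_{[−1,1]³} (v₁p₁ + v₂p₂ + v₃p₃) = 0 for all polynomials p₁, p₂, p₃ with deg_x p₁ ≤ k−2, deg_y p₁ ≤ k, deg_z p₁ ≤ k; deg_y p₂ ≤ k−2, deg_x p₂ ≤ k, deg_z p₂ ≤ k; deg_z p₃ ≤ k−2, deg_x p₃ ≤ k, deg_y p₃ ≤ k. Then v = 0. -/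
/-! Write `v = a + curl (r × q)`.

*Reduction to one variable.* Fix `i` and the exponents `b, c` of the other two variables, and let
`f(x)` be the univariate polynomial whose coefficients are those of `x_i^• x_j^b x_l^c` in `v i`.
Because `v i` has degree at most `k` in `x_j` and `x_l`, vanishing of the facet and interior moments
against tensor-product monomials gives, by nondegeneracy of the `L²` pairing on polynomials of
degree at most `k` used in each of `x_j`, `x_l`, that `f(±1) = 0` and that `f` is orthogonal to
`x^j` for `j + 2 ≤ k` (`sliceSum_eq_zero`). As `deg f ≤ k + 1`, this determines `f` up to a scalar:
if the coefficient of `x^(k+1)` vanishes then `f = (x² - 1) h` with `deg h ≤ k - 2`, so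
`∫ (1 - x²) h² = 0` and `f = 0` (`bubble_coeffs_eq_zero`). Hence `v i` is controlled by its
coefficients at `m + e_i` with `m i = k`.

*The algebra of `V^k`.* With `curl (r × q) = r (div q) - 2 q - (r · ∇) q`:
* if `m i = k`, the coefficient of `v i` at `m + e_i` is the coefficient of `div q` at `m`
  (`coeff_V_top`); it is therefore independent of `i`, and it vanishes at `m = (k, k, k)`;
* `div v = div a` has degree at most `k - 1` in each variable, so its coefficient at `m` vanishes
  as soon as some `m i = k` (`coeff_div_V`).

Let `m i = m j = k`, with third index `l`. The term of `div v` at `m` from `v l` vanishes, by the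
one-variable statement and the vanishing at `(k, k, k)`; the other two terms are equal and sum to
zero, so both vanish. Hence, if only `m i = k` is assumed, the terms of `div v` at `m` from the
other two components vanish by the one-variable statement, and so does the coefficient of `v i` at
`m + e_i`. One last use of the one-variable statement gives `v = 0`. -/

open MvPolynomial MeasureTheory

/-- Membership in the Raviart–Thomas space `RT^{k-1}` on ℝ³. -/
def memRT (k : ℕ) (v : Fin 3 → MvPolynomial (Fin 3) ℝ) : Prop :=
  ∀ i j : Fin 3, (v i).degreeOf j ≤ if i = j then k else k - 1

/-- Membership in the bubble space `B^k` on ℝ³. -/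
def memB (k : ℕ) (q : Fin 3 → MvPolynomial (Fin 3) ℝ) : Prop :=
  ∀ i : Fin 3, ∀ m ∈ (q i).support, (∀ j : Fin 3, m j ≤ k) ∧ (∃ j : Fin 3, j ≠ i ∧ m j = k)

/-- The position vector field `r = (x, y, z)`. -/
noncomputable def posVF : Fin 3 → MvPolynomial (Fin 3) ℝ := fun i => X i

/-- Cross product of polynomial vector fields on ℝ³. -/
noncomputable def cross (a b : Fin 3 → MvPolynomial (Fin 3) ℝ) :
    Fin 3 → MvPolynomial (Fin 3) ℝ :=
  ![a 1 * b 2 - a 2 * b 1, a 2 * b 0 - a 0 * b 2, a 0 * b 1 - a 1 * b 0]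

/-- Curl of a polynomial vector field on ℝ³. -/
noncomputable def curl (w : Fin 3 → MvPolynomial (Fin 3) ℝ) :
    Fin 3 → MvPolynomial (Fin 3) ℝ :=
  ![pderiv 1 (w 2) - pderiv 2 (w 1), pderiv 2 (w 0) - pderiv 0 (w 2),
    pderiv 0 (w 1) - pderiv 1 (w 0)]

/-- Membership in the enhanced Raviart–Thomas space `V^k = RT^{k-1} + B̃^k`. -/
def memV (k : ℕ) (v : Fin 3 → MvPolynomial (Fin 3) ℝ) : Prop :=
  ∃ a q : Fin 3 → MvPolynomial (Fin 3) ℝ,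
    memRT k a ∧ memB k q ∧ v = a + curl (cross posVF q)

/-- The point of the face `{x_i = s}` of `[-1,1]³` with face coordinates `(u, w)`. -/
def facePt (i : Fin 3) (s u w : ℝ) : Fin 3 → ℝ :=
  fun j => if j = i then s else if (if i = 0 then j = 1 else j = 0) then u else w

/-- Integral of a polynomial over the cube `[-1,1]³`. -/
noncomputable def cubeInt (f : MvPolynomial (Fin 3) ℝ) : ℝ :=
  ∫ x in Set.Icc (-1:ℝ) 1, ∫ y in Set.Icc (-1:ℝ) 1, ∫ z in Set.Icc (-1:ℝ) 1,
    eval ![x, y, z] f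

/-! ### Univariate facts on `[-1, 1]` -/

/-- The `n`-th moment `∫_{-1}^1 x^n dx`. -/
noncomputable def mom (n : ℕ) : ℝ := ∫ x in Set.Icc (-1:ℝ) 1, x ^ n

lemma poly_integrable (P : Polynomial ℝ) :
    IntegrableOn (fun x => P.eval x) (Set.Icc (-1:ℝ) 1) :=
  P.continuous.continuousOn.integrableOn_Icc

lemma poly_eq_zero_of_integral (P : Polynomial ℝ)
    (hnn : ∀ x ∈ Set.Icc (-1:ℝ) 1, 0 ≤ P.eval x)
    (h0 : ∫ x in Set.Icc (-1:ℝ) 1, P.eval x = 0) : P = 0 := by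
  by_contra hP
  have hae := (setIntegral_eq_zero_iff_of_nonneg_ae
    ((ae_restrict_mem measurableSet_Icc).mono hnn) (poly_integrable P)).1 h0
  -- A continuous function that vanishes almost everywhere on an interval vanishes on it.
  have hEq : Set.EqOn (fun x => P.eval x) 0 (Set.Icc (-1:ℝ) 1) :=
    Measure.eqOn_Icc_of_ae_eq volume (by norm_num) hae P.continuous.continuousOn
      continuousOn_const
  apply hP
  apply Polynomial.eq_zero_of_infinite_isRoot
  exact (Set.Icc_infinite (by norm_num : (-1:ℝ) < 1)).mono fun x hx => hEq hx

/-- Termwise integration, in the form in which it is iterated over the coordinates. -/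
lemma integral_sum_mom {ι : Type*} (S : Finset ι) (c : ι → ℝ) (e : ι → ℕ) :
    ∫ x in Set.Icc (-1:ℝ) 1, ∑ m ∈ S, c m * x ^ e m = ∑ m ∈ S, c m * mom (e m) := by
  rw [integral_finsetSum]
  · simp only [integral_const_mul, mom]
  · intro m _
    exact (by fun_prop : Continuous fun x : ℝ => c m * x ^ e m).continuousOn.integrableOn_Icc

lemma integral_poly_mul (N : ℕ) (P Q : Polynomial ℝ) (hQ : Q.natDegree < N)
    (h : ∀ i < N, ∫ x in Set.Icc (-1:ℝ) 1, P.eval x * x ^ i = 0) :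
    ∫ x in Set.Icc (-1:ℝ) 1, P.eval x * Q.eval x = 0 := by
  simp only [Polynomial.eval_eq_sum_range' hQ, Finset.mul_sum]
  rw [integral_finsetSum]
  · refine Finset.sum_eq_zero fun i hi => ?_
    have : ∀ x : ℝ, P.eval x * (Q.coeff i * x ^ i) = Q.coeff i * (P.eval x * x ^ i) :=
      fun x => by ring
    simp only [this, integral_const_mul, h i (Finset.mem_range.1 hi), mul_zero]
  · intro i _
    exact (by fun_prop : Continuous fun x : ℝ =>
      P.eval x * (Q.coeff i * x ^ i)).continuousOn.integrableOn_Icc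

/-- The polynomial `∑_{a ≤ k} c_a x^a`. -/
noncomputable def polyOf (k : ℕ) (c : ℕ → ℝ) : Polynomial ℝ :=
  ∑ a ∈ Finset.range (k + 1), Polynomial.monomial a (c a)

lemma polyOf_eval (k : ℕ) (c : ℕ → ℝ) (x : ℝ) :
    (polyOf k c).eval x = ∑ a ∈ Finset.range (k + 1), c a * x ^ a := by
  simp [polyOf, Polynomial.eval_finsetSum]

lemma polyOf_coeff (k : ℕ) (c : ℕ → ℝ) (a : ℕ) (ha : a ≤ k) : (polyOf k c).coeff a = c a := by
  simp [polyOf, Polynomial.coeff_monomial, Nat.lt_succ_of_le ha]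

lemma polyOf_natDegree (k : ℕ) (c : ℕ → ℝ) : (polyOf k c).natDegree ≤ k := by
  refine Polynomial.natDegree_sum_le_of_forall_le _ _ fun a ha => ?_
  exact (Polynomial.natDegree_monomial_le _).trans (Nat.lt_succ_iff.1 (Finset.mem_range.1 ha))

lemma polyOf_integral (k : ℕ) (c : ℕ → ℝ) (i : ℕ) :
    ∫ x in Set.Icc (-1:ℝ) 1, (polyOf k c).eval x * x ^ i
      = ∑ a ∈ Finset.range (k + 1), c a * mom (a + i) := by
  rw [← integral_sum_mom]
  refine integral_congr_ae (Filter.Eventually.of_forall fun x => ?_)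
  simp only [polyOf_eval, Finset.sum_mul, pow_add, mul_assoc]

/-- Nondegeneracy of the `L²(-1,1)` pairing on polynomials of degree at most `k`. -/
lemma coeffs_eq_zero (k : ℕ) (c : ℕ → ℝ)
    (h : ∀ i ≤ k, ∑ a ∈ Finset.range (k + 1), c a * mom (a + i) = 0) :
    ∀ a ≤ k, c a = 0 := by
  have hP : polyOf k c * polyOf k c = 0 := by
    apply poly_eq_zero_of_integral
    · intro x _
      rw [Polynomial.eval_mul]
      exact mul_self_nonneg _
    · simp only [Polynomial.eval_mul]
      refine integral_poly_mul (k + 1) _ _ (Nat.lt_succ_of_le (polyOf_natDegree k c)) fun i hi => ?_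
      rw [polyOf_integral]
      exact h i (Nat.lt_succ_iff.1 hi)
  intro a ha
  rw [← polyOf_coeff k c a ha, mul_self_eq_zero.1 hP, Polynomial.coeff_zero]

/-- A polynomial of degree at most `k` that vanishes at `±1` and is orthogonal to all polynomials
of degree at most `k - 2` is zero. -/
lemma bubble_coeffs_eq_zero (k : ℕ) (c : ℕ → ℝ)
    (h1 : ∑ a ∈ Finset.range (k + 1), c a * (1:ℝ) ^ a = 0)
    (h2 : ∑ a ∈ Finset.range (k + 1), c a * (-1:ℝ) ^ a = 0)
    (h : ∀ i, i + 2 ≤ k → ∑ a ∈ Finset.range (k + 1), c a * mom (a + i) = 0) :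
    ∀ a ≤ k, c a = 0 := by
  have hdvd : (Polynomial.X - Polynomial.C (1:ℝ)) * (Polynomial.X - Polynomial.C (-1:ℝ)) ∣
      polyOf k c := by
    refine IsCoprime.mul_dvd (Polynomial.isCoprime_X_sub_C_of_isUnit_sub ?_) ?_ ?_
    · norm_num
    · rw [Polynomial.dvd_iff_isRoot, Polynomial.IsRoot, polyOf_eval, h1]
    · rw [Polynomial.dvd_iff_isRoot, Polynomial.IsRoot, polyOf_eval, h2]
  obtain ⟨g, hg⟩ := hdvd
  have hP : polyOf k c = 0 := by
    by_contra hne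
    have hg0 : g ≠ 0 := by
      rintro rfl
      exact hne (by rw [hg, mul_zero])
    have hdeg : g.natDegree + 2 ≤ k := by
      have hk := polyOf_natDegree k c
      rw [hg, Polynomial.natDegree_mul (mul_ne_zero (Polynomial.X_sub_C_ne_zero _)
        (Polynomial.X_sub_C_ne_zero _)) hg0, Polynomial.natDegree_mul
        (Polynomial.X_sub_C_ne_zero _) (Polynomial.X_sub_C_ne_zero _),
        Polynomial.natDegree_X_sub_C, Polynomial.natDegree_X_sub_C] at hk
      omega
    have hint : ∫ x in Set.Icc (-1:ℝ) 1, (polyOf k c).eval x * g.eval x = 0 := by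
      refine integral_poly_mul (k - 1) _ _ (by omega) fun i hi => ?_
      rw [polyOf_integral]
      exact h i (by omega)
    have hz : -(polyOf k c * g) = 0 := by
      apply poly_eq_zero_of_integral
      · intro x hx
        simp only [hg, Polynomial.eval_neg, Polynomial.eval_mul, Polynomial.eval_sub,
          Polynomial.eval_X, Polynomial.eval_C]
        have : 0 ≤ (1 - x) * (x + 1) := mul_nonneg (by linarith [hx.2]) (by linarith [hx.1])
        nlinarith [mul_nonneg this (sq_nonneg (g.eval x))]
      · simp only [Polynomial.eval_neg, Polynomial.eval_mul, integral_neg, hint, neg_zero]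
    exact (mul_ne_zero hne hg0) (neg_eq_zero.1 hz)
  intro a ha
  rw [← polyOf_coeff k c a ha, hP, Polynomial.coeff_zero]

/-! ### Moments of trivariate polynomials -/

/-- The exponent with value `a` at `i`, `b` at `j`, and `c` at the remaining index. -/
noncomputable def mk3 (i j : Fin 3) (a b c : ℕ) : Fin 3 →₀ ℕ :=
  Finsupp.equivFunOnFinite.symm fun t => if t = i then a else if t = j then b else c

@[simp] lemma mk3_apply (i j : Fin 3) (a b c : ℕ) (t : Fin 3) :
    mk3 i j a b c t = if t = i then a else if t = j then b else c := rfl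

/-- `(i, j, l)` lists the three indices, with `i` first and the other two in increasing order. -/
def IsTriple (i j l : Fin 3) : Prop :=
  (i = 0 ∧ j = 1 ∧ l = 2) ∨ (i = 1 ∧ j = 0 ∧ l = 2) ∨ (i = 2 ∧ j = 0 ∧ l = 1)

lemma exists_triple (i : Fin 3) : ∃ j l, IsTriple i j l := by
  fin_cases i
  · exact ⟨1, 2, by simp [IsTriple]⟩
  · exact ⟨0, 2, by simp [IsTriple]⟩
  · exact ⟨0, 1, by simp [IsTriple]⟩

lemma IsTriple.props {i j l : Fin 3} (h : IsTriple i j l) :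
    j ≠ i ∧ l ≠ i ∧ l ≠ j ∧ ∀ t, t = i ∨ t = j ∨ t = l := by
  rcases h with ⟨rfl, rfl, rfl⟩ | ⟨rfl, rfl, rfl⟩ | ⟨rfl, rfl, rfl⟩ <;> decide

lemma IsTriple.prod_eq {i j l : Fin 3} (h : IsTriple i j l) (F : Fin 3 → ℝ) :
    ∏ t, F t = F i * (F j * F l) := by
  rcases h with ⟨rfl, rfl, rfl⟩ | ⟨rfl, rfl, rfl⟩ | ⟨rfl, rfl, rfl⟩ <;>
    rw [Fin.prod_univ_three] <;> ring

lemma face_moment {i j l : Fin 3} (h : IsTriple i j l) (s : ℝ) (f : MvPolynomial (Fin 3) ℝ)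
    (n : Fin 3 →₀ ℕ) (hn : n i = 0) :
    (∫ u in Set.Icc (-1:ℝ) 1, ∫ w in Set.Icc (-1:ℝ) 1,
        s * eval (facePt i s u w) f * eval (facePt i s u w) (monomial n 1)) =
      ∑ m ∈ f.support, s * (coeff m f * (s ^ m i * (mom (m j + n j) * mom (m l + n l)))) := by
  have key : ∀ u w : ℝ,
      s * eval (facePt i s u w) f * eval (facePt i s u w) (monomial n 1) =
      ∑ m ∈ f.support, (s * (coeff m f * s ^ m i) * u ^ (m j + n j)) * w ^ (m l + n l) := by
    intro u w
    have hi : facePt i s u w i = s := by simp [facePt]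
    have hj : facePt i s u w j = u := by
      rcases h with ⟨rfl, rfl, rfl⟩ | ⟨rfl, rfl, rfl⟩ | ⟨rfl, rfl, rfl⟩ <;> simp [facePt]
    have hl : facePt i s u w l = w := by
      rcases h with ⟨rfl, rfl, rfl⟩ | ⟨rfl, rfl, rfl⟩ | ⟨rfl, rfl, rfl⟩ <;> simp [facePt]
    rw [eval_monomial, Finsupp.prod_fintype _ _ (by simp), eval_eq', Finset.mul_sum,
      Finset.sum_mul]
    refine Finset.sum_congr rfl fun m _ => ?_
    rw [h.prod_eq, h.prod_eq, hi, hj, hl, hn]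
    ring
  simp only [key, integral_sum_mom]
  have comm : ∀ u : ℝ,
      ∑ m ∈ f.support, (s * (coeff m f * s ^ m i) * u ^ (m j + n j)) * mom (m l + n l) =
      ∑ m ∈ f.support, (s * (coeff m f * s ^ m i) * mom (m l + n l)) * u ^ (m j + n j) :=
    fun u => Finset.sum_congr rfl fun m _ => by ring
  simp only [comm, integral_sum_mom]
  exact Finset.sum_congr rfl fun m _ => by ring

lemma cube_moment {i j l : Fin 3} (h : IsTriple i j l) (f : MvPolynomial (Fin 3) ℝ)
    (n : Fin 3 →₀ ℕ) :
    cubeInt (f * monomial n 1) =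
      ∑ m ∈ f.support,
        coeff m f * (mom (m i + n i) * (mom (m j + n j) * mom (m l + n l))) := by
  have key : ∀ x y z : ℝ, eval ![x, y, z] (f * monomial n 1) =
      ∑ m ∈ f.support,
        (coeff m f * x ^ (m 0 + n 0) * y ^ (m 1 + n 1)) * z ^ (m 2 + n 2) := by
    intro x y z
    rw [eval_mul, eval_monomial, Finsupp.prod_fintype _ _ (by simp), eval_eq', Finset.sum_mul]
    refine Finset.sum_congr rfl fun m _ => ?_
    simp only [Fin.prod_univ_three, Matrix.cons_val]
    ring
  have comm1 : ∀ x y : ℝ,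
      ∑ m ∈ f.support, (coeff m f * x ^ (m 0 + n 0) * y ^ (m 1 + n 1)) * mom (m 2 + n 2) =
      ∑ m ∈ f.support, (coeff m f * x ^ (m 0 + n 0) * mom (m 2 + n 2)) * y ^ (m 1 + n 1) :=
    fun x y => Finset.sum_congr rfl fun m _ => by ring
  have comm2 : ∀ x : ℝ,
      ∑ m ∈ f.support, (coeff m f * x ^ (m 0 + n 0) * mom (m 2 + n 2)) * mom (m 1 + n 1) =
      ∑ m ∈ f.support, (coeff m f * mom (m 2 + n 2) * mom (m 1 + n 1)) * x ^ (m 0 + n 0) :=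
    fun x => Finset.sum_congr rfl fun m _ => by ring
  simp only [cubeInt, key, integral_sum_mom, comm1, comm2]
  refine Finset.sum_congr rfl fun m _ => ?_
  rw [← h.prod_eq fun t => mom (m t + n t), Fin.prod_univ_three]
  ring

/-- Rewrites a sum over the support of `f` as a sum over a box of exponents containing it. -/
lemma sum_support_eq_box {i j l : Fin 3} (h : IsTriple i j l) (A K : ℕ)
    (f : MvPolynomial (Fin 3) ℝ)
    (hi : ∀ m ∈ f.support, m i ≤ A) (hjl : ∀ m ∈ f.support, ∀ t, t ≠ i → m t ≤ K)
    (F : ℕ → ℕ → ℕ → ℝ) :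
    ∑ m ∈ f.support, coeff m f * F (m i) (m j) (m l) =
      ∑ b ∈ Finset.range (K + 1), ∑ c ∈ Finset.range (K + 1), ∑ a ∈ Finset.range (A + 1),
        coeff (mk3 i j a b c) f * F a b c := by
  obtain ⟨hji, hli, hlj, hall⟩ := h.props
  simp only [← Finset.sum_product']
  have hmk : ∀ m : Fin 3 →₀ ℕ, mk3 i j (m i) (m j) (m l) = m := by
    intro m
    ext t
    rcases hall t with rfl | rfl | rfl <;> simp [hji, hli, hlj]
  refine Finset.sum_of_injOn (fun m => (m j, m l, m i)) ?_ ?_ ?_ ?_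
  · intro m _ m' _ hmm
    simp only [Prod.mk.injEq] at hmm
    rw [← hmk m, ← hmk m', hmm.1, hmm.2.1, hmm.2.2]
  · intro m hm
    have h1 := hi m hm
    have h2 := hjl m hm j hji
    have h3 := hjl m hm l hli
    simp only [Finset.coe_product, Set.mem_prod, Finset.coe_range, Set.mem_Iio]
    omega
  · rintro ⟨b, c, a⟩ _ hnot
    have : mk3 i j a b c ∉ f.support := by
      intro hmem
      exact hnot ⟨_, hmem, by simp [hji, hli, hlj]⟩
    simp only [notMem_support_iff.1 this, zero_mul]
  · intro m _
    simp only [hmk]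

/-- If the functional `lam ⊗ L² ⊗ L²` annihilates `f` times every polynomial in `x_j, x_l` of
degree at most `K` in each, then `lam` annihilates every one-variable slice of `f`. -/
lemma sliceSum_eq_zero {i j l : Fin 3} (h : IsTriple i j l) (A K : ℕ)
    (f : MvPolynomial (Fin 3) ℝ)
    (hi : ∀ m ∈ f.support, m i ≤ A) (hjl : ∀ m ∈ f.support, ∀ t, t ≠ i → m t ≤ K)
    (lam : ℕ → ℝ)
    (h0 : ∀ b' ≤ K, ∀ c' ≤ K,
      ∑ m ∈ f.support, coeff m f * (lam (m i) * (mom (m j + b') * mom (m l + c'))) = 0) :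
    ∀ b ≤ K, ∀ c ≤ K, ∑ a ∈ Finset.range (A + 1), coeff (mk3 i j a b c) f * lam a = 0 := by
  intro b hb
  refine coeffs_eq_zero K _ fun c' hc' => ?_
  revert b
  refine coeffs_eq_zero K (fun b => ∑ c ∈ Finset.range (K + 1),
    (∑ a ∈ Finset.range (A + 1), coeff (mk3 i j a b c) f * lam a) * mom (c + c')) fun b' hb' => ?_
  have := h0 b' hb' c' hc'
  rw [sum_support_eq_box h A K f hi hjl
    (fun a b c => lam a * (mom (b + b') * mom (c + c')))] at this
  rw [← this]
  simp only [Finset.sum_mul]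
  exact Finset.sum_congr rfl fun b _ => Finset.sum_congr rfl fun c _ =>
    Finset.sum_congr rfl fun a _ => by ring

/-! ### Coefficients of fields in `V^k` -/

lemma curl_cross_eq (q : Fin 3 → MvPolynomial (Fin 3) ℝ) (i : Fin 3) :
    curl (cross posVF q) i =
      X i * (∑ j, pderiv j (q j)) - 2 * q i - ∑ j, X j * pderiv j (q i) := by
  fin_cases i <;>
    simp [curl, cross, posVF, Fin.sum_univ_three] <;> ring

lemma coeff_X_mul_pderiv (j : Fin 3) (f : MvPolynomial (Fin 3) ℝ) (m : Fin 3 →₀ ℕ) :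
    coeff m (X j * pderiv j f) = m j * coeff m f := by
  induction f using MvPolynomial.induction_on' with
  | add p q hp hq => simp [hp, hq, mul_add]
  | monomial n a =>
    rw [X_mul_pderiv_monomial, coeff_smul, nsmul_eq_mul, coeff_monomial]
    split_ifs with h
    · rw [h]
    · simp

lemma coeff_curl_cross (q : Fin 3 → MvPolynomial (Fin 3) ℝ) (i : Fin 3) (m : Fin 3 →₀ ℕ) :
    coeff m (curl (cross posVF q) i) = coeff m (X i * (∑ j, pderiv j (q j)))
      - (2 + ∑ j, (m j : ℝ)) * coeff m (q i) := by
  rw [curl_cross_eq, coeff_sub, coeff_sub, coeff_sum]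
  have : (2 : MvPolynomial (Fin 3) ℝ) = C 2 := (map_ofNat C 2).symm
  rw [this, coeff_C_mul]
  simp only [coeff_X_mul_pderiv, ← Finset.sum_mul]
  ring

lemma memRT.coeff_eq_zero {k : ℕ} {a : Fin 3 → MvPolynomial (Fin 3) ℝ} (ha : memRT k a)
    (i j : Fin 3) (m : Fin 3 →₀ ℕ) (h : (if i = j then k else k - 1) < m j) :
    coeff m (a i) = 0 := by
  by_contra hne
  exact absurd ((monomial_le_degreeOf j (mem_support_iff.2 hne)).trans (ha i j)) (by omega)

lemma memB.coeff_eq_zero {k : ℕ} {q : Fin 3 → MvPolynomial (Fin 3) ℝ} (hq : memB k q)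
    (i j : Fin 3) (m : Fin 3 →₀ ℕ) (h : k < m j) : coeff m (q i) = 0 := by
  by_contra hne
  exact absurd ((hq i m (mem_support_iff.2 hne)).1 j) (by omega)

/-- The top coefficients of `v` in `V^k` in each own variable come from `div q` alone. -/
lemma coeff_V_top {k : ℕ} {a q : Fin 3 → MvPolynomial (Fin 3) ℝ} (ha : memRT k a)
    (hq : memB k q) (i : Fin 3) (m : Fin 3 →₀ ℕ) (hm : m i = k) :
    coeff (m + Finsupp.single i 1) ((a + curl (cross posVF q)) i) =
      coeff m (∑ j, pderiv j (q j)) := by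
  rw [Pi.add_apply, coeff_add, coeff_curl_cross,
    ha.coeff_eq_zero i i _ (by simp [hm]), hq.coeff_eq_zero i i _ (by simp [hm]),
    add_comm m, coeff_X_mul]
  ring

lemma coeff_divB {k : ℕ} {q : Fin 3 → MvPolynomial (Fin 3) ℝ} (hq : memB k q)
    (m : Fin 3 →₀ ℕ) (hm : (∃ j, k < m j) ∨ ∀ j, m j = k) :
    coeff m (∑ j, pderiv j (q j)) = 0 := by
  rw [coeff_sum]
  refine Finset.sum_eq_zero fun t _ => ?_
  rw [coeff_pderiv]
  have : coeff (m + Finsupp.single t 1) (q t) = 0 := by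
    rcases hm with ⟨j, hj⟩ | hm
    · refine hq.coeff_eq_zero t j _ ?_
      rw [Finsupp.add_apply]
      omega
    · exact hq.coeff_eq_zero t t _ (by simp [hm t])
  rw [this, zero_mul]

lemma V_support {k : ℕ} {a q : Fin 3 → MvPolynomial (Fin 3) ℝ} (ha : memRT k a)
    (hq : memB k q) (i : Fin 3) (m : Fin 3 →₀ ℕ)
    (hm : m ∈ ((a + curl (cross posVF q)) i).support) :
    m i ≤ k + 1 ∧ ∀ t, t ≠ i → m t ≤ k := by
  by_contra hcon
  have hc : k + 1 < m i ∨ ∃ t, t ≠ i ∧ k < m t := by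
    by_contra! hc
    exact hcon hc
  obtain ⟨t, ht⟩ : ∃ t, k < m t := by
    rcases hc with hc | ⟨t, _, ht⟩
    · exact ⟨i, by omega⟩
    · exact ⟨t, ht⟩
  have h1 : coeff m (a i) = 0 := ha.coeff_eq_zero i t m (by split_ifs <;> omega)
  have h2 : coeff m (q i) = 0 := hq.coeff_eq_zero i t m ht
  have h3 : coeff m (X i * ∑ j, pderiv j (q j)) = 0 := by
    rw [coeff_X_mul']
    split_ifs with hs
    · refine coeff_divB hq _ (Or.inl ?_)
      rcases hc with hc | ⟨t, hti, ht⟩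
      · exact ⟨i, by simp; omega⟩
      · exact ⟨t, by simpa [Finsupp.single_apply, hti.symm] using ht⟩
    · rfl
  rw [mem_support_iff, Pi.add_apply, coeff_add, coeff_curl_cross, h1, h2, h3] at hm
  simp at hm

lemma div_curl (w : Fin 3 → MvPolynomial (Fin 3) ℝ) : ∑ i, pderiv i (curl w i) = 0 := by
  ext m
  simp only [Fin.sum_univ_three, curl, Matrix.cons_val, coeff_add, coeff_pderiv, coeff_sub,
    Finsupp.add_apply, coeff_zero]
  rw [add_right_comm m (Finsupp.single 1 1) (Finsupp.single 0 1),
    add_right_comm m (Finsupp.single 2 1) (Finsupp.single 0 1),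
    add_right_comm m (Finsupp.single 2 1) (Finsupp.single 1 1)]
  simp
  ring

/-- `div v = div a` has degree at most `k - 1` in each variable, so its coefficients with an
exponent equal to `k` vanish. -/
lemma coeff_div_V {k : ℕ} (hk : 1 ≤ k) {a : Fin 3 → MvPolynomial (Fin 3) ℝ} (ha : memRT k a)
    (w : Fin 3 → MvPolynomial (Fin 3) ℝ) (i : Fin 3) (m : Fin 3 →₀ ℕ) (hm : m i = k) :
    ∑ j, coeff (m + Finsupp.single j 1) ((a + curl w) j) * ((m j : ℝ) + 1) = 0 := by
  simp only [← coeff_pderiv]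
  rw [← coeff_sum]
  simp only [Pi.add_apply, map_add, Finset.sum_add_distrib, div_curl, add_zero]
  rw [coeff_sum]
  refine Finset.sum_eq_zero fun t _ => ?_
  rw [coeff_pderiv, ha.coeff_eq_zero t i _ ?_, zero_mul]
  by_cases hti : t = i
  · subst hti
    simp [hm]
  · simp [hti, hm]
    omega

/-! ### Unisolvency -/

lemma degreeOf_monomial_one (n : Fin 3 →₀ ℕ) (t : Fin 3) :
    (monomial n (1:ℝ)).degreeOf t = n t := degreeOf_monomial_eq n t one_ne_zero

/-- A component with vanishing degrees of freedom is controlled, slice by slice, by its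
coefficients of degree `k + 1` in its own variable. -/
lemma coeff_eq_zero_of_top (k : ℕ) (v : Fin 3 → MvPolynomial (Fin 3) ℝ)
    (hsupp : ∀ i, ∀ m ∈ (v i).support, m i ≤ k + 1 ∧ ∀ t, t ≠ i → m t ≤ k)
    (hface : ∀ i : Fin 3, ∀ s : ℝ, s = 1 ∨ s = -1 →
      ∀ p : MvPolynomial (Fin 3) ℝ, p.degreeOf i = 0 → (∀ j : Fin 3, p.degreeOf j ≤ k) →
      (∫ u in Set.Icc (-1:ℝ) 1, ∫ w in Set.Icc (-1:ℝ) 1,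
        s * eval (facePt i s u w) (v i) * eval (facePt i s u w) p) = 0)
    (hint : ∀ p : Fin 3 → MvPolynomial (Fin 3) ℝ,
      (∀ i : Fin 3, ∀ m ∈ (p i).support,
        m i + 2 ≤ k ∧ ∀ j : Fin 3, j ≠ i → m j ≤ k) →
      cubeInt (∑ i, v i * p i) = 0)
    (i : Fin 3) (m m' : Fin 3 →₀ ℕ) (hmm : ∀ t, t ≠ i → m t = m' t) (htop : m' i = k + 1)
    (hz : coeff m' (v i) = 0) : coeff m (v i) = 0 := by
  obtain ⟨j, l, h⟩ := exists_triple i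
  obtain ⟨hji, hli, hlj, hall⟩ := h.props
  by_contra hne
  obtain ⟨hmi, hmt⟩ := hsupp i m (mem_support_iff.2 hne)
  have hsi : ∀ m ∈ (v i).support, m i ≤ k + 1 := fun m hm => (hsupp i m hm).1
  have hst : ∀ m ∈ (v i).support, ∀ t, t ≠ i → m t ≤ k := fun m hm => (hsupp i m hm).2
  have hm' : mk3 i j (k + 1) (m j) (m l) = m' := by
    ext t
    rcases hall t with rfl | rfl | rfl
    · simp [htop]
    · simp [hji, hmm _ hji]
    · simp [hli, hlj, hmm _ hli]
  have hm : mk3 i j (m i) (m j) (m l) = m := by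
    ext t
    rcases hall t with rfl | rfl | rfl <;> simp [hji, hli, hlj]
  -- Slice relations, with the vanishing term of degree `k + 1` removed.
  have slice : ∀ lam : ℕ → ℝ,
      (∀ b' ≤ k, ∀ c' ≤ k, ∑ n ∈ (v i).support,
        coeff n (v i) * (lam (n i) * (mom (n j + b') * mom (n l + c'))) = 0) →
      ∑ a ∈ Finset.range (k + 1), coeff (mk3 i j a (m j) (m l)) (v i) * lam a = 0 := by
    intro lam hlam
    have := sliceSum_eq_zero h (k + 1) k (v i) hsi hst lam hlam (m j) (hmt j hji) (m l) (hmt l hli)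
    rwa [Finset.sum_range_succ, hm', hz, zero_mul, add_zero] at this
  have hfaceS : ∀ s : ℝ, s = 1 ∨ s = -1 →
      ∑ a ∈ Finset.range (k + 1), coeff (mk3 i j a (m j) (m l)) (v i) * s ^ a = 0 := by
    intro s hs
    refine slice (fun a => s ^ a) fun b' hb' c' hc' => ?_
    have hs0 : s ≠ 0 := by rcases hs with rfl | rfl <;> norm_num
    have := hface i s hs (monomial (mk3 i j 0 b' c') 1)
      (by rw [degreeOf_monomial_one]; simp)
      (fun t => by rw [degreeOf_monomial_one, mk3_apply]; split_ifs <;> omega)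
    rw [face_moment h s (v i) _ (by simp), ← Finset.mul_sum] at this
    simpa [hs0, hji, hli, hlj] using this
  have hintS : ∀ e, e + 2 ≤ k →
      ∑ a ∈ Finset.range (k + 1), coeff (mk3 i j a (m j) (m l)) (v i) * mom (a + e) = 0 := by
    intro e he
    refine slice (fun a => mom (a + e)) fun b' hb' c' hc' => ?_
    have := hint (Pi.single i (monomial (mk3 i j e b' c') 1)) (by
      intro t n hn
      by_cases hti : t = i
      · subst hti
        rw [Pi.single_eq_same] at hn
        have hn' := Finset.mem_singleton.1 (support_monomial_subset hn)
        subst hn'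
        refine ⟨by simpa using he, fun u hu => ?_⟩
        rw [mk3_apply, if_neg hu]
        split_ifs <;> assumption
      · simp [Pi.single_eq_of_ne hti] at hn)
    rw [Finset.sum_eq_single i (fun t _ hti => by rw [Pi.single_eq_of_ne hti, mul_zero])
      (by simp), Pi.single_eq_same, cube_moment h] at this
    simpa [hji, hli, hlj] using this
  have := bubble_coeffs_eq_zero k (fun a => coeff (mk3 i j a (m j) (m l)) (v i))
    (hfaceS 1 (Or.inl rfl)) (hfaceS (-1) (Or.inr rfl)) hintS
  by_cases hlt : m i ≤ k
  · have h0 := this (m i) hlt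
    simp only [hm] at h0
    exact hne h0
  · have : m = m' := by
      rw [← hm, ← hm', show m i = k + 1 by omega]
    exact hne (this ▸ hz)

/-- if all facet degrees of freedom of `v ∈ V^k` (moments of `v·n` against
`Q^k` on each face of `[-1,1]³`) and all interior degrees of freedom (moments against
`P^{k-2}(x_i) ⊗ Q^k` in the `i`-th component) vanish, then `v = 0`. -/
theorem unisolvency (k : ℕ) (hk : 1 ≤ k) (v : Fin 3 → MvPolynomial (Fin 3) ℝ)
    (hv : memV k v)
    (hface : ∀ i : Fin 3, ∀ s : ℝ, s = 1 ∨ s = -1 →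
      ∀ p : MvPolynomial (Fin 3) ℝ, p.degreeOf i = 0 → (∀ j : Fin 3, p.degreeOf j ≤ k) →
      (∫ u in Set.Icc (-1:ℝ) 1, ∫ w in Set.Icc (-1:ℝ) 1,
        s * eval (facePt i s u w) (v i) * eval (facePt i s u w) p) = 0)
    (hint : ∀ p : Fin 3 → MvPolynomial (Fin 3) ℝ,
      (∀ i : Fin 3, ∀ m ∈ (p i).support,
        m i + 2 ≤ k ∧ ∀ j : Fin 3, j ≠ i → m j ≤ k) →
      cubeInt (∑ i, v i * p i) = 0) :
    v = 0 := by
  obtain ⟨a, q, ha, hq, hvaq⟩ := hv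
  have hsupp : ∀ i, ∀ m ∈ (v i).support, m i ≤ k + 1 ∧ ∀ t, t ≠ i → m t ≤ k := by
    intro i m hm
    rw [hvaq] at hm
    exact V_support ha hq i m hm
  have htop : ∀ i (m : Fin 3 →₀ ℕ), m i = k →
      coeff (m + Finsupp.single i 1) (v i) = coeff m (∑ j, pderiv j (q j)) := by
    intro i m hm
    rw [hvaq]
    exact coeff_V_top ha hq i m hm
  have hdiv : ∀ i (m : Fin 3 →₀ ℕ), m i = k →
      ∑ j, coeff (m + Finsupp.single j 1) (v j) * ((m j : ℝ) + 1) = 0 := by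
    intro i m hm
    rw [hvaq]
    exact coeff_div_V hk ha _ i m hm
  have star := coeff_eq_zero_of_top k v hsupp hface hint
  have hkk : (k : ℝ) + 1 ≠ 0 := by positivity
  -- Replacing the `i`-th exponent by `k` moves any coefficient of `v i` to a top one.
  have star' : ∀ i (m : Fin 3 →₀ ℕ),
      coeff (m.update i k + Finsupp.single i 1) (v i) = 0 → coeff m (v i) = 0 := by
    intro i m h0
    refine star i m _ (fun t ht => ?_) ?_ h0
    · simp [ht]
    · simp
  have two : ∀ i j, j ≠ i → ∀ m : Fin 3 →₀ ℕ, m i = k → m j = k →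
      coeff (m + Finsupp.single i 1) (v i) = 0 := by
    intro i j hji m hmi hmj
    have hij : coeff (m + Finsupp.single j 1) (v j) = coeff (m + Finsupp.single i 1) (v i) := by
      rw [htop i m hmi, htop j m hmj]
    obtain ⟨l, hli, hlj, hall⟩ : ∃ l, l ≠ i ∧ l ≠ j ∧ ∀ t, t = i ∨ t = j ∨ t = l := by
      clear * - hji
      decide +revert
    have hl : coeff (m + Finsupp.single l 1) (v l) = 0 := by
      apply star'
      rw [htop l _ (by simp)]
      refine coeff_divB hq _ (Or.inr fun t => ?_)
      rcases hall t with rfl | rfl | rfl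
      · simp [hli.symm, hmi]
      · simp [hlj.symm, hmj]
      · simp
    have hd := hdiv i m hmi
    have huniv : (Finset.univ : Finset (Fin 3)) = {i, j, l} := by
      ext t
      simpa using hall t
    rw [huniv, Finset.sum_insert (by simp [hji.symm, hli.symm]),
      Finset.sum_insert (by simp [hlj.symm]), Finset.sum_singleton, hl, hij, hmi, hmj] at hd
    have : coeff (m + Finsupp.single i 1) (v i) * ((k : ℝ) + 1) = 0 := by linarith
    exact (mul_eq_zero.1 this).resolve_right hkk
  have one : ∀ i (m : Fin 3 →₀ ℕ), m i = k → coeff (m + Finsupp.single i 1) (v i) = 0 := by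
    intro i m hmi
    have hd := hdiv i m hmi
    rw [Finset.sum_eq_single i (fun j _ hji => ?_) (by simp), hmi] at hd
    · exact (mul_eq_zero.1 hd).resolve_right hkk
    · rw [star' j _ (two j i hji.symm _ (by simp) ?_), zero_mul]
      simp [hji.symm, hmi]
  funext i
  ext m
  rw [Pi.zero_apply, coeff_zero]
  exact star' i m (one i _ (by simp))
end

section
/- The divergence operator maps the enhanced Raviart–Thomas space V^k onto the space of polynomials of degree at most k−1 in each of the variables x, y, z: for every v ∈ V^k, div v = ∂_x v₁ + ∂_y v₂ + ∂_z v₃ has degree at most k−1 in each variable, and every polynomial of degree at most k−1 in each variable equals div v for some v ∈ V^k. -/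
/-!
The divergence of a curl vanishes, because partial derivatives of polynomials commute
(`divg_curl`), so on `V^k = RT^{k-1} + B̃^k` only the Raviart–Thomas part contributes to
the divergence. There, `∂_i` lowers the degree in the `i`-th variable from `k` to `k - 1` and
raises no other degree
(`degreeOf_pderiv_le`). Conversely, `p` with all degrees at most `k - 1` has a
termwise antiderivative `P` in `x`, of degree at most `k` in `x` and at most `k - 1` in `y`, `z`
(`exists_antideriv`); the field `(P, 0, 0)` lies in `RT^{k-1}` and has divergence `p`.
-/

open MvPolynomial

/-- The divergence of a polynomial vector field on ℝ³. -/
noncomputable def divg (v : Fin 3 → MvPolynomial (Fin 3) ℝ) : MvPolynomial (Fin 3) ℝ :=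
  ∑ i, pderiv i (v i)

lemma pderiv_comm_apply (i j : Fin 3) (p : MvPolynomial (Fin 3) ℝ) :
    pderiv i (pderiv j p) = pderiv j (pderiv i p) := by
  -- The commutator of two derivations is a derivation, so it suffices to check the variables.
  let D (l : Fin 3) : Derivation ℝ (MvPolynomial (Fin 3) ℝ) (MvPolynomial (Fin 3) ℝ) := pderiv l
  have h : ⁅D i, D j⁆ = 0 := by
    apply MvPolynomial.derivation_ext
    intro l
    simp [D, Derivation.commutator_apply, pderiv_X, Pi.single_apply, apply_ite]
  have h' := DFunLike.congr_fun h p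
  rw [Derivation.commutator_apply] at h'
  exact sub_eq_zero.mp h'

lemma divg_curl (w : Fin 3 → MvPolynomial (Fin 3) ℝ) : divg (curl w) = 0 := by
  simp only [divg, curl, Fin.sum_univ_three, Matrix.cons_val, map_sub]
  rw [pderiv_comm_apply 1 0, pderiv_comm_apply 2 0, pderiv_comm_apply 2 1]
  ring

lemma divg_add (v w : Fin 3 → MvPolynomial (Fin 3) ℝ) : divg (v + w) = divg v + divg w := by
  simp [divg, Finset.sum_add_distrib]

lemma degreeOf_pderiv_le (i j : Fin 3) (p : MvPolynomial (Fin 3) ℝ) :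
    (pderiv i p).degreeOf j ≤ p.degreeOf j - if i = j then 1 else 0 := by
  rw [degreeOf_le_iff]
  intro m hm
  -- A monomial `m` of `∂_i p` comes from the monomial `m + e_i` of `p`.
  have hs : m + Finsupp.single i 1 ∈ p.support := by
    rw [mem_support_iff] at hm ⊢
    intro h0
    apply hm
    rw [coeff_pderiv, h0, zero_mul]
  have := monomial_le_degreeOf j hs
  simp only [Finsupp.add_apply, Finsupp.single_apply] at this
  split_ifs at this ⊢ <;> omega

/-- Termwise antiderivative in the first variable, with control of the degrees. -/
lemma exists_antideriv (d : ℕ) (p : MvPolynomial (Fin 3) ℝ) (hp : ∀ j, p.degreeOf j ≤ d) :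
    ∃ P : MvPolynomial (Fin 3) ℝ, pderiv 0 P = p ∧
      ∀ j, P.degreeOf j ≤ if 0 = j then d + 1 else d := by
  refine ⟨∑ m ∈ p.support, monomial (m + Finsupp.single 0 1) (p.coeff m / (m 0 + 1)), ?_, ?_⟩
  · conv_rhs => rw [p.as_sum]
    rw [map_sum]
    refine Finset.sum_congr rfl fun m _ => ?_
    have h : (m 0 : ℝ) + 1 ≠ 0 := by positivity
    rw [pderiv_monomial]
    simp [div_mul_cancel₀ _ h]
  · intro j
    refine (degreeOf_sum_le _ _ _).trans (Finset.sup_le fun m hm => ?_)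
    rw [degreeOf_le_iff]
    intro n hn
    obtain rfl := Finset.mem_singleton.mp (support_monomial_subset hn)
    have := (monomial_le_degreeOf j hm).trans (hp j)
    simp only [Finsupp.add_apply, Finsupp.single_apply]
    split_ifs <;> omega

/-- the divergence maps `V^k` onto `Q^{k-1}`: for every `v ∈ V^k`,
`div v` has degree at most `k-1` in each variable, and every polynomial of degree at
most `k-1` in each variable is the divergence of some `v ∈ V^k`. -/
theorem div_maps_onto_Qkm1 (k : ℕ) (hk : 1 ≤ k) :
    (∀ v : Fin 3 → MvPolynomial (Fin 3) ℝ, memV k v →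
      ∀ j : Fin 3, (divg v).degreeOf j ≤ k - 1) ∧
    (∀ p : MvPolynomial (Fin 3) ℝ, (∀ j : Fin 3, p.degreeOf j ≤ k - 1) →
      ∃ v : Fin 3 → MvPolynomial (Fin 3) ℝ, memV k v ∧ divg v = p) := by
  constructor
  · rintro v ⟨a, q, ha, -, rfl⟩ j
    rw [divg_add, divg_curl, add_zero]
    refine (degreeOf_sum_le _ _ _).trans (Finset.sup_le fun i _ => ?_)
    have h₁ := degreeOf_pderiv_le i j (a i)
    have h₂ := ha i j
    split_ifs at h₁ h₂ <;> omega
  · intro p hp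
    obtain ⟨P, hP, hdeg⟩ := exists_antideriv (k - 1) p hp
    rw [Nat.sub_add_cancel hk] at hdeg
    refine ⟨![P, 0, 0], ⟨![P, 0, 0], 0, ?_, ?_, ?_⟩, ?_⟩
    · intro i j
      fin_cases i
      · exact hdeg j
      · simp
      · simp
    · intro i m hm
      simp at hm
    · funext i
      fin_cases i <;> simp [curl, cross]
    · simp [divg, Fin.sum_univ_three, hP]
end
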